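/- Let m ∈ ℝ with m < -1, and let a, b : ℝ^N × ℝ → ℂ be symbols of order m, i.e. for all multiindices β and integers α ≥ 0 and compact K ⊂ ℝ^N, |∂_x^β ∂_{ξ}^α a(x,ξ)| ≤ C ⟨ξ⟩^{m-α} on K × ℝ and similarly for b. Then the fiberwise convolution c(x,ξ) = ∫_ℝ a(x, ξ-η) b(x,η) dη is again a symbol of order m: for all β, α, K there is C' with |∂_x^β ∂_ξ^α c(x,ξ)| ≤ C' ⟨ξ⟩^{m-α} on K × ℝ. -/

import Mathlib

noncomputable section

/-- Directional derivative of a function on `ℝ^N` in the `i`-th coordinate direction. -/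
def dirDeriv {N : ℕ} (i : Fin N) (f : (Fin N → ℝ) → ℂ) : (Fin N → ℝ) → ℂ :=
  fun x => fderiv ℝ f x (Pi.single i 1)

/-- Iterated directional derivatives `∂_x^β` along a list of coordinate directions. -/
def dirDerivs {N : ℕ} (L : List (Fin N)) (f : (Fin N → ℝ) → ℂ) : (Fin N → ℝ) → ℂ :=
  L.foldr dirDeriv f

/-- `a : ℝ^N × ℝ → ℂ` is a symbol of order `m`: for all multiindices `β` (encoded as a
list of coordinate directions), integers `α ≥ 0` and compact `K ⊂ ℝ^N`,
`|∂_x^β ∂_ξ^α a(x,ξ)| ≤ C ⟨ξ⟩^{m-α}` on `K × ℝ`, with `⟨ξ⟩ = √(1+ξ²)`. -/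
def IsSymbolOfOrder {N : ℕ} (m : ℝ) (a : (Fin N → ℝ) → ℝ → ℂ) : Prop :=
  ∀ (L : List (Fin N)) (α : ℕ) (K : Set (Fin N → ℝ)), IsCompact K →
    ∃ C : ℝ, ∀ x ∈ K, ∀ ξ : ℝ,
      ‖dirDerivs L (fun x' => iteratedDeriv α (fun t => a x' t) ξ) x‖ ≤
        C * Real.sqrt (1 + ξ ^ 2) ^ (m - α)

namespace ConvSym

open MeasureTheory Filter Topology
open scoped ContDiff

variable {N : ℕ}

/-- The total space `ℝ^N × ℝ`. -/
abbrev TS (N : ℕ) := (Fin N → ℝ) × ℝ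

/-- Derivative in the constant direction `v`. -/
def D (v : TS N) (F : TS N → ℂ) : TS N → ℂ := fun p => fderiv ℝ F p v

/-- Basis direction in `x`. -/
def ex (i : Fin N) : TS N := (Pi.single i 1, 0)

/-- The `ξ` direction. -/
def et : TS N := (0, 1)

def DL (L : List (Fin N)) (F : TS N → ℂ) : TS N → ℂ := L.foldr (fun i G => D (ex i) G) F

def DT (n : ℕ) (F : TS N → ℂ) : TS N → ℂ := (D et)^[n] F

/-- Multiplication by `ξ`. -/
def M (F : TS N → ℂ) : TS N → ℂ := fun p => (p.2 : ℂ) * F p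

abbrev Sm (F : TS N → ℂ) : Prop := ContDiff ℝ ∞ F

lemma Sm.diff {F : TS N → ℂ} (h : Sm F) : Differentiable ℝ F := h.differentiable (by simp)

lemma Sm.D {F : TS N → ℂ} (h : Sm F) (v : TS N) : Sm (D v F) := by
  have : ContDiff ℝ ∞ (fderiv ℝ F) := h.fderiv_right (by simp)
  exact this.clm_apply contDiff_const

lemma Sm.DL {F : TS N → ℂ} (h : Sm F) (L : List (Fin N)) : Sm (DL L F) := by
  induction L with
  | nil => exact h
  | cons i L ih => exact ih.D _

lemma DT_succ (n : ℕ) (F : TS N → ℂ) : DT (n+1) F = D et (DT n F) :=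
  Function.iterate_succ_apply' _ _ _

lemma DT_succ' (n : ℕ) (F : TS N → ℂ) : DT (n+1) F = DT n (D et F) :=
  Function.iterate_succ_apply _ _ _

lemma Sm.DT {F : TS N → ℂ} (h : Sm F) (n : ℕ) : Sm (DT n F) := by
  induction n with
  | zero => exact h
  | succ n ih => rw [DT_succ]; exact ih.D _

lemma Sm.M {F : TS N → ℂ} (h : Sm F) : Sm (M F) := by
  unfold ConvSym.M
  have : ContDiff ℝ ∞ (fun p : TS N => (p.2 : ℂ)) :=
    Complex.ofRealCLM.contDiff.comp contDiff_snd
  exact this.mul h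

lemma Sm.csmul {F : TS N → ℂ} (h : Sm F) (c : ℂ) : Sm (c • F) := contDiff_const.smul h

lemma D_add (v : TS N) {F G : TS N → ℂ} (hF : Sm F) (hG : Sm G) :
    D v (F + G) = D v F + D v G := by
  funext p
  simp [D, fderiv_add (hF.diff p) (hG.diff p)]

lemma D_smul (v : TS N) (c : ℂ) {F : TS N → ℂ} (hF : Sm F) :
    D v (c • F) = c • D v F := by
  funext p
  simp [D, fderiv_const_smul (hF.diff p) c]

lemma D_M (v : TS N) {F : TS N → ℂ} (hF : Sm F) :
    D v (M F) = (v.2 : ℂ) • F + M (D v F) := by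
  funext p
  have h1 : HasFDerivAt (fun p : TS N => (p.2 : ℂ))
      (Complex.ofRealCLM.comp (ContinuousLinearMap.snd ℝ (Fin N → ℝ) ℝ)) p :=
    (Complex.ofRealCLM.comp (ContinuousLinearMap.snd ℝ (Fin N → ℝ) ℝ)).hasFDerivAt
  have h2 := h1.mul (hF.diff p).hasFDerivAt
  have : fderiv ℝ (M F) p = _ := h2.fderiv
  simp only [D, this, M, Pi.add_apply, Pi.smul_apply]
  simp
  ring

lemma D_comm (v w : TS N) {F : TS N → ℂ} (hF : Sm F) : D v (D w F) = D w (D v F) := by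
  funext p
  have hd : Differentiable ℝ (fderiv ℝ F) :=
    (hF.fderiv_right (m := ∞) (by simp)).differentiable (by simp)
  have key : ∀ v w : TS N, D v (D w F) p = fderiv ℝ (fderiv ℝ F) p v w := by
    intro v w
    have : HasFDerivAt (D w F) _ p := (hd p).hasFDerivAt.clm_apply (hasFDerivAt_const w p)
    simp only [D] at this ⊢
    rw [this.fderiv]
    simp
  rw [key, key]
  have hs : IsSymmSndFDerivAt ℝ F p :=
    (hF.contDiffAt (x := p)).isSymmSndFDerivAt (by
      simp only [minSmoothness_of_isRCLikeNormedField]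
      exact WithTop.coe_le_coe.2 (le_top : (2 : ℕ∞) ≤ ⊤))
  exact hs v w

lemma DL_add (L : List (Fin N)) {F G : TS N → ℂ} (hF : Sm F) (hG : Sm G) :
    DL L (F + G) = DL L F + DL L G := by
  induction L with
  | nil => rfl
  | cons i L ih =>
    change D (ex i) (DL L (F+G)) = D (ex i) (DL L F) + D (ex i) (DL L G)
    rw [ih, D_add _ (hF.DL L) (hG.DL L)]

lemma DL_smul (L : List (Fin N)) (c : ℂ) {F : TS N → ℂ} (hF : Sm F) :
    DL L (c • F) = c • DL L F := by
  induction L with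
  | nil => rfl
  | cons i L ih =>
    change D (ex i) (DL L (c • F)) = c • D (ex i) (DL L F)
    rw [ih, D_smul _ _ (hF.DL L)]

lemma DL_M (L : List (Fin N)) {F : TS N → ℂ} (hF : Sm F) :
    DL L (M F) = M (DL L F) := by
  induction L with
  | nil => rfl
  | cons i L ih =>
    change D (ex i) (DL L (M F)) = M (D (ex i) (DL L F))
    rw [ih, D_M _ (hF.DL L)]
    simp [ex]

lemma DL_append (L : List (Fin N)) (i : Fin N) (F : TS N → ℂ) :
    DL (L ++ [i]) F = DL L (D (ex i) F) := by
  simp [DL]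

lemma DT_add (n : ℕ) {F G : TS N → ℂ} (hF : Sm F) (hG : Sm G) :
    DT n (F + G) = DT n F + DT n G := by
  induction n with
  | zero => rfl
  | succ n ih => rw [DT_succ, ih, D_add _ (hF.DT n) (hG.DT n), DT_succ, DT_succ]

lemma DT_smul (n : ℕ) (c : ℂ) {F : TS N → ℂ} (hF : Sm F) :
    DT n (c • F) = c • DT n F := by
  induction n with
  | zero => rfl
  | succ n ih => rw [DT_succ, ih, D_smul _ _ (hF.DT n), DT_succ]

lemma DT_D (n : ℕ) (v : TS N) {F : TS N → ℂ} (hF : Sm F) :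
    DT n (D v F) = D v (DT n F) := by
  induction n with
  | zero => rfl
  | succ n ih => rw [DT_succ, ih, D_comm _ _ (hF.DT n), DT_succ]

lemma DT_X (n : ℕ) {F : TS N → ℂ} (hF : Sm F) :
    DT n (M (D et F)) = M (DT (n+1) F) + (n : ℂ) • DT n F := by
  induction n with
  | zero => simp [DT]
  | succ n ih =>
    rw [DT_succ, ih, D_add _ (hF.DT _).M ((hF.DT n).csmul _), D_M _ (hF.DT _),
      D_smul _ _ (hF.DT n), ← DT_succ, ← DT_succ]
    funext p
    simp [et]
    ring

/-- Japanese bracket. -/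
def jb (t : ℝ) : ℝ := Real.sqrt (1 + t ^ 2)

lemma one_le_jb (t : ℝ) : 1 ≤ jb t := by
  unfold jb; rw [Real.one_le_sqrt]; nlinarith [sq_nonneg t]

lemma jb_pos (t : ℝ) : 0 < jb t := lt_of_lt_of_le one_pos (one_le_jb t)

lemma abs_le_jb (t : ℝ) : |t| ≤ jb t := by
  unfold jb; apply Real.abs_le_sqrt; linarith

lemma jb_le (t : ℝ) : jb t ≤ 1 + |t| := by
  unfold jb
  rw [Real.sqrt_le_left (by positivity)]
  nlinarith [sq_abs t, abs_nonneg t]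

lemma jb_cont : Continuous jb := by unfold jb; fun_prop

lemma jb_rpow_cont (s : ℝ) : Continuous (fun t => jb t ^ s) :=
  jb_cont.rpow_const (fun t => Or.inl (jb_pos t).ne')

lemma jb_rpow_pos (t s : ℝ) : 0 < jb t ^ s := Real.rpow_pos_of_pos (jb_pos t) s

lemma jb_rpow_mono (t : ℝ) {s r : ℝ} (h : s ≤ r) : jb t ^ s ≤ jb t ^ r :=
  Real.rpow_le_rpow_of_exponent_le (one_le_jb t) h

lemma jb_rpow_le_one (t : ℝ) {s : ℝ} (h : s ≤ 0) : jb t ^ s ≤ 1 :=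
  Real.rpow_le_one_of_one_le_of_nonpos (one_le_jb t) h

lemma jb_int {m : ℝ} (hm : m < -1) : Integrable (fun t => jb t ^ m) := by
  have := integrable_rpow_neg_one_add_norm_sq (E := ℝ) (μ := volume) (r := -m)
    (by simp; linarith)
  refine this.congr (Eventually.of_forall fun t => ?_)
  simp only [jb, Real.sqrt_eq_rpow, Real.norm_eq_abs, sq_abs]
  rw [← Real.rpow_mul (by positivity)]
  congr 1; ring

lemma jb_int_sub {m : ℝ} (hm : m < -1) (ξ : ℝ) : Integrable (fun t => jb (ξ - t) ^ m) :=
  (jb_int hm).comp_sub_left ξ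

lemma jb_tri (a b : ℝ) : jb (a + b) ≤ 2 * max (jb a) (jb b) := by
  have h1 : jb (a+b) ≤ jb a + jb b := by
    have ha := jb_pos a
    have hb := jb_pos b
    have ha2 : jb a ^ 2 = 1 + a^2 := Real.sq_sqrt (by positivity)
    have hb2 : jb b ^ 2 = 1 + b^2 := Real.sq_sqrt (by positivity)
    have hab : a * b ≤ jb a * jb b := by
      calc a * b ≤ |a * b| := le_abs_self _
        _ = |a| * |b| := abs_mul _ _
        _ ≤ _ := mul_le_mul (abs_le_jb a) (abs_le_jb b) (abs_nonneg _) ha.le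
    change Real.sqrt _ ≤ _
    rw [Real.sqrt_le_left (by positivity)]
    nlinarith
  have := le_max_left (jb a) (jb b)
  have := le_max_right (jb a) (jb b)
  linarith

lemma jb_prod {m : ℝ} (hm : m ≤ 0) (a b : ℝ) :
    jb a ^ m * jb b ^ m ≤ (2:ℝ) ^ (-m) * jb (a + b) ^ m * (jb a ^ m + jb b ^ m) := by
  have pa := jb_rpow_pos a m
  have pb := jb_rpow_pos b m
  have p2 : (0:ℝ) < (2:ℝ) ^ (-m) * jb (a + b) ^ m :=
    mul_pos (Real.rpow_pos_of_pos two_pos _) (jb_rpow_pos _ _)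
  have key : ∀ c, 0 < c → jb (a+b) ≤ 2 * c → c ^ m ≤ (2:ℝ) ^ (-m) * jb (a + b) ^ m := by
    intro c hc h
    have h1 := Real.rpow_le_rpow_of_nonpos (jb_pos (a+b)) h hm
    rw [Real.mul_rpow two_pos.le hc.le] at h1
    calc c ^ m = (2:ℝ)^(-m) * ((2:ℝ)^m * c^m) := by
          rw [← mul_assoc, ← Real.rpow_add two_pos]; simp
      _ ≤ _ := by gcongr
  have ht := jb_tri a b
  rcases max_choice (jb a) (jb b) with h | h <;> rw [h] at ht
  · have := key _ (jb_pos a) ht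
    nlinarith [mul_le_mul_of_nonneg_right this pb.le, mul_pos p2 pa]
  · have := key _ (jb_pos b) ht
    nlinarith [mul_le_mul_of_nonneg_right this pa.le, mul_pos p2 pb]

/-- Locally uniform growth bound. -/
def Bd (s : ℝ) (H : TS N → ℂ) : Prop :=
  ∀ K : Set (Fin N → ℝ), IsCompact K → ∃ C : ℝ, 0 ≤ C ∧ ∀ x ∈ K, ∀ ξ : ℝ,
    ‖H (x, ξ)‖ ≤ C * jb ξ ^ s

lemma Bd.add {s : ℝ} {F G : TS N → ℂ} (hF : Bd s F) (hG : Bd s G) : Bd s (F + G) := by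
  intro K hK
  obtain ⟨A, hA, h1⟩ := hF K hK
  obtain ⟨B, hB, h2⟩ := hG K hK
  refine ⟨A + B, by positivity, fun x hx ξ => ?_⟩
  calc _ ≤ ‖F (x, ξ)‖ + ‖G (x, ξ)‖ := norm_add_le _ _
    _ ≤ A * jb ξ ^ s + B * jb ξ ^ s := add_le_add (h1 x hx ξ) (h2 x hx ξ)
    _ = _ := by ring

lemma Bd.smul {s : ℝ} {F : TS N → ℂ} (hF : Bd s F) (c : ℂ) : Bd s (c • F) := by
  intro K hK
  obtain ⟨A, hA, h1⟩ := hF K hK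
  refine ⟨‖c‖ * A, by positivity, fun x hx ξ => ?_⟩
  rw [Pi.smul_apply, norm_smul, mul_assoc]
  exact mul_le_mul_of_nonneg_left (h1 x hx ξ) (norm_nonneg _)

lemma Bd.mono {s r : ℝ} {F : TS N → ℂ} (hF : Bd s F) (h : s ≤ r) : Bd r F := by
  intro K hK
  obtain ⟨A, hA, h1⟩ := hF K hK
  refine ⟨A, hA, fun x hx ξ => (h1 x hx ξ).trans ?_⟩
  exact mul_le_mul_of_nonneg_left (jb_rpow_mono ξ h) hA

lemma Bd.M {s : ℝ} {F : TS N → ℂ} (hF : Bd s F) : Bd (s + 1) (M F) := by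
  intro K hK
  obtain ⟨A, hA, h1⟩ := hF K hK
  refine ⟨A, hA, fun x hx ξ => ?_⟩
  rw [ConvSym.M, norm_mul, Real.rpow_add_one (jb_pos ξ).ne', Complex.norm_real, Real.norm_eq_abs]
  calc _ ≤ jb ξ * (A * jb ξ ^ s) :=
        mul_le_mul (abs_le_jb ξ) (h1 x hx ξ) (norm_nonneg _) (jb_pos ξ).le
    _ = _ := by ring

lemma Bd.gain {s : ℝ} {F : TS N → ℂ} (hF : Bd s F) (hM : Bd s (ConvSym.M F)) : Bd (s - 1) F := by
  intro K hK
  obtain ⟨A, hA, h1⟩ := hF K hK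
  obtain ⟨B, hB, h2⟩ := hM K hK
  refine ⟨A + B, by positivity, fun x hx ξ => ?_⟩
  have e1 := h1 x hx ξ
  have e2 := h2 x hx ξ
  rw [ConvSym.M, norm_mul, Complex.norm_real, Real.norm_eq_abs] at e2
  rw [Real.rpow_sub_one (jb_pos ξ).ne', ← mul_div_assoc, le_div_iff₀ (jb_pos ξ)]
  dsimp only at e2
  nlinarith [mul_le_mul_of_nonneg_left (jb_le ξ) (norm_nonneg (F (x, ξ)))]

/-- Smooth symbols on the total space. -/
def Sym (m : ℝ) (F : TS N → ℂ) : Prop :=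
  Sm F ∧ ∀ (L : List (Fin N)) (n : ℕ), Bd (m - n) (DL L (DT n F))

lemma Sym.add {m : ℝ} {F G : TS N → ℂ} (hF : Sym m F) (hG : Sym m G) : Sym m (F + G) := by
  refine ⟨hF.1.add hG.1, fun L n => ?_⟩
  rw [DT_add n hF.1 hG.1, DL_add L (hF.1.DT n) (hG.1.DT n)]
  exact (hF.2 L n).add (hG.2 L n)

lemma Sym.smul {m : ℝ} {F : TS N → ℂ} (hF : Sym m F) (c : ℂ) : Sym m (c • F) := by
  refine ⟨contDiff_const.smul hF.1, fun L n => ?_⟩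
  rw [DT_smul n c hF.1, DL_smul L c (hF.1.DT n)]
  exact (hF.2 L n).smul c

lemma Sym.Dt {m : ℝ} {F : TS N → ℂ} (hF : Sym m F) : Sym m (D et F) := by
  refine ⟨hF.1.D _, fun L n => ?_⟩
  rw [← DT_succ']
  exact (hF.2 L (n+1)).mono (by push_cast; linarith)

lemma Sym.Dx {m : ℝ} {F : TS N → ℂ} (hF : Sym m F) (i : Fin N) : Sym m (D (ex i) F) := by
  refine ⟨hF.1.D _, fun L n => ?_⟩
  rw [DT_D n _ hF.1, ← DL_append]
  exact hF.2 _ n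

lemma Sym.X {m : ℝ} {F : TS N → ℂ} (hF : Sym m F) : Sym m (M (D et F)) := by
  refine ⟨(hF.1.D _).M, fun L n => ?_⟩
  rw [DT_X n hF.1, DL_add L (hF.1.DT _).M ((hF.1.DT n).csmul _),
    DL_M L (hF.1.DT _), DL_smul L _ (hF.1.DT n)]
  refine Bd.add ?_ ((hF.2 L n).smul _)
  have := (hF.2 L (n+1)).M
  refine this.mono (by push_cast; linarith)

lemma vec_decomp (v : TS N) : v = (∑ i, v.1 i • ex i) + v.2 • et := by
  ext j
  · simp [ex, et, Prod.fst_sum, Finset.sum_apply, Pi.single_apply]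
  · simp [ex, et, Prod.snd_sum]

lemma D_decomp (v : TS N) (F : TS N → ℂ) :
    D v F = (∑ i, (v.1 i : ℂ) • D (ex i) F) + (v.2 : ℂ) • D et F := by
  funext p
  conv_lhs => rw [vec_decomp v]
  simp [D, Finset.sum_apply]

lemma Sym.zero (m : ℝ) {F : TS N → ℂ} (hF : Sym m F) : Sym m (0 : TS N → ℂ) := by
  simpa using hF.smul 0

lemma Sym.Dv {m : ℝ} {F : TS N → ℂ} (hF : Sym m F) (v : TS N) : Sym m (D v F) := by
  rw [D_decomp]
  refine Sym.add ?_ (hF.Dt.smul _)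
  exact Finset.sum_induction _ (Sym m) (fun _ _ => Sym.add) (hF.zero) (fun i _ => (hF.Dx i).smul _)

lemma Sym.bd {m : ℝ} {F : TS N → ℂ} (hF : Sym m F) : Bd m F := by
  simpa [DL, DT] using hF.2 [] 0

lemma opnorm_le (A : TS N →L[ℝ] ℂ) : ‖A‖ ≤ (∑ i, ‖A (ex i)‖) + ‖A et‖ := by
  refine A.opNorm_le_bound (by positivity) fun v => ?_
  conv_lhs => rw [vec_decomp v]
  rw [map_add, map_sum, add_mul, Finset.sum_mul]
  refine (norm_add_le _ _).trans (add_le_add ((norm_sum_le _ _).trans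
    (Finset.sum_le_sum fun i _ => ?_)) ?_)
  · rw [map_smul, norm_smul, mul_comm]
    gcongr
    exact (norm_le_pi_norm v.1 i).trans (norm_fst_le v)
  · rw [map_smul, norm_smul, mul_comm]
    gcongr
    exact norm_snd_le v

lemma Sym.fderiv_bd {m : ℝ} {F : TS N → ℂ} (hF : Sym m F) (K : Set (Fin N → ℝ))
    (hK : IsCompact K) : ∃ C : ℝ, 0 ≤ C ∧ ∀ x ∈ K, ∀ ξ : ℝ,
      ‖fderiv ℝ F (x, ξ)‖ ≤ C * jb ξ ^ m := by
  choose C hC h using fun i => (hF.Dx i).bd K hK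
  obtain ⟨B, hB, h2⟩ := hF.Dt.bd K hK
  refine ⟨(∑ i, C i) + B, add_nonneg (Finset.sum_nonneg fun i _ => hC i) hB, fun x hx ξ => ?_⟩
  refine (opnorm_le _).trans ?_
  rw [add_mul, Finset.sum_mul]
  exact add_le_add (Finset.sum_le_sum fun i _ => h i x hx ξ) (h2 x hx ξ)

/-- Fiberwise convolution. -/
def conv (F G : TS N → ℂ) : TS N → ℂ := fun p => ∫ η : ℝ, F (p.1, p.2 - η) * G (p.1, η)

lemma Bd.conv {m : ℝ} (hm : m < -1) {F G : TS N → ℂ} (hF : Bd m F) (hG : Bd m G) :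
    Bd m (conv F G) := by
  intro K hK
  obtain ⟨A, hA, h1⟩ := hF K hK
  obtain ⟨B, hB, h2⟩ := hG K hK
  set J := ∫ t, jb t ^ m with hJ
  have hJ0 : 0 ≤ J := integral_nonneg fun t => (jb_rpow_pos t m).le
  refine ⟨A * B * (2:ℝ) ^ (-m) * (J + J), by positivity, fun x hx ξ => ?_⟩
  have hi := ((jb_int_sub hm ξ).add (jb_int hm)).const_mul
    (A * B * ((2:ℝ) ^ (-m) * jb ξ ^ m))
  have := norm_integral_le_of_norm_le (f := fun η => F (x, ξ - η) * G (x, η)) hi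
    (Eventually.of_forall fun η => ?_)
  · refine this.trans (le_of_eq ?_)
    rw [integral_const_mul]
    simp only [Pi.add_apply]
    rw [integral_add (jb_int_sub hm ξ) (jb_int hm),
      integral_sub_left_eq_self (fun t => jb t ^ m) volume ξ, ← hJ]
    ring
  · have e := jb_prod (m := m) (by linarith) (ξ - η) η
    rw [sub_add_cancel] at e
    rw [norm_mul]
    calc _ ≤ (A * jb (ξ - η) ^ m) * (B * jb η ^ m) :=
          mul_le_mul (h1 x hx _) (h2 x hx _) (norm_nonneg _)
            (mul_nonneg hA (jb_rpow_pos _ _).le)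
      _ = A * B * (jb (ξ - η) ^ m * jb η ^ m) := by ring
      _ ≤ A * B * ((2:ℝ) ^ (-m) * jb ξ ^ m * (jb (ξ - η) ^ m + jb η ^ m)) := by gcongr
      _ = _ := by simp only [Pi.add_apply]; ring

/-- Integrability of the convolution integrand. -/
lemma conv_int {m : ℝ} (hm : m < -1) {F G : TS N → ℂ} (cF : Continuous F) (cG : Continuous G)
    (hF : Bd 0 F) (hG : Bd m G) (p : TS N) :
    Integrable (fun η => F (p.1, p.2 - η) * G (p.1, η)) := by
  obtain ⟨A, hA, h1⟩ := hF {p.1} isCompact_singleton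
  obtain ⟨B, hB, h2⟩ := hG {p.1} isCompact_singleton
  refine ((jb_int hm).const_mul (A * B)).mono'
    (Continuous.aestronglyMeasurable (by fun_prop)) (Eventually.of_forall fun η => ?_)
  have e1 := h1 p.1 rfl (p.2 - η)
  have e2 := h2 p.1 rfl η
  rw [Real.rpow_zero, mul_one] at e1
  rw [norm_mul, mul_assoc]
  exact mul_le_mul e1 e2 (norm_nonneg _) hA

/-- Same, decay on the first factor. -/
lemma conv_int' {m : ℝ} (hm : m < -1) {F G : TS N → ℂ} (cF : Continuous F) (cG : Continuous G)
    (hF : Bd m F) (hG : Bd 0 G) (p : TS N) :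
    Integrable (fun η => F (p.1, p.2 - η) * G (p.1, η)) := by
  have := (conv_int hm cG cF hG hF p).comp_sub_left p.2
  refine this.congr (Eventually.of_forall fun η => ?_)
  simp [mul_comm]

lemma Sym.int {m : ℝ} (hm : m < -1) {F G : TS N → ℂ} (hF : Sym m F) (hG : Sym m G) (p : TS N) :
    Integrable (fun η => F (p.1, p.2 - η) * G (p.1, η)) :=
  conv_int hm hF.1.continuous hG.1.continuous (hF.bd.mono (by linarith)) hG.bd p

/-- The projection onto the `x` directions. -/
def px : TS N →L[ℝ] TS N :=
  (ContinuousLinearMap.inl ℝ (Fin N → ℝ) ℝ).comp (ContinuousLinearMap.fst ℝ (Fin N → ℝ) ℝ)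

lemma px_norm : ‖(px : TS N →L[ℝ] TS N)‖ ≤ 1 := by
  refine ContinuousLinearMap.opNorm_le_bound _ zero_le_one fun v => ?_
  simp [px, Prod.norm_def]

/-- Derivative of the convolution integrand. -/
def dint (F G : TS N → ℂ) (p : TS N) (η : ℝ) : TS N →L[ℝ] ℂ :=
  F (p.1, p.2 - η) • ((fderiv ℝ G (p.1, η)).comp px) +
    G (p.1, η) • fderiv ℝ F (p.1, p.2 - η)

lemma dint_has {F G : TS N → ℂ} (hF : Sm F) (hG : Sm G) (p : TS N) (η : ℝ) :
    HasFDerivAt (fun p : TS N => F (p.1, p.2 - η) * G (p.1, η)) (dint F G p η) p := by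
  have i1 : HasFDerivAt (fun p : TS N => ((p.1, p.2 - η) : TS N))
      (ContinuousLinearMap.id ℝ (TS N)) p := by
    have := (hasFDerivAt_id (𝕜 := ℝ) p).sub_const ((0, η) : TS N)
    have e : (fun p : TS N => ((p.1, p.2 - η) : TS N)) = fun x => id x - ((0, η) : TS N) := by
      funext q; ext <;> simp
    rw [e]; exact this
  have i2 : HasFDerivAt (fun p : TS N => ((p.1, η) : TS N)) px p := by
    have := (px (N := N)).hasFDerivAt (x := p) |>.add_const ((0, η) : TS N)
    have e : (fun p : TS N => ((p.1, η) : TS N)) = fun x => px x + ((0, η) : TS N) := by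
      funext q; ext <;> simp [px]
    rw [e]; exact this
  have j1 := (hF.diff (p.1, p.2 - η)).hasFDerivAt.comp p i1
  have j2 := (hG.diff (p.1, η)).hasFDerivAt.comp p i2
  exact j1.mul j2

lemma conv_hasFDerivAt {m : ℝ} (hm : m < -1) {F G : TS N → ℂ} (hF : Sym m F) (hG : Sym m G)
    (p : TS N) : Integrable (dint F G p) ∧ HasFDerivAt (conv F G) (∫ η, dint F G p η) p := by
  have hK : IsCompact (Metric.closedBall p.1 1) := isCompact_closedBall _ _
  obtain ⟨A, hA, h1⟩ := hF.bd _ hK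
  obtain ⟨B, hB, h2⟩ := hG.bd _ hK
  obtain ⟨A', hA', h1'⟩ := hF.fderiv_bd _ hK
  obtain ⟨B', hB', h2'⟩ := hG.fderiv_bd _ hK
  have m0 : m ≤ 0 := by linarith
  have hbound : ∀ η, ∀ q ∈ Metric.closedBall p 1,
      ‖dint F G q η‖ ≤ (A * B' + B * A') * jb η ^ m := by
    intro η q hq
    have hq1 : q.1 ∈ Metric.closedBall p.1 1 := by
      rw [Metric.mem_closedBall] at hq ⊢
      exact (le_max_left _ _).trans hq
    have a1 := h1 q.1 hq1 (q.2 - η)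
    have a2 := h2 q.1 hq1 η
    have a3 := h1' q.1 hq1 (q.2 - η)
    have a4 := h2' q.1 hq1 η
    have o := jb_rpow_le_one (q.2 - η) m0
    have a1 : ‖F (q.1, q.2 - η)‖ ≤ A := a1.trans (mul_le_of_le_one_right hA o)
    have a3 : ‖fderiv ℝ F (q.1, q.2 - η)‖ ≤ A' := a3.trans (mul_le_of_le_one_right hA' o)
    have a5 : ‖(fderiv ℝ G (q.1, η)).comp px‖ ≤ B' * jb η ^ m := by
      refine (ContinuousLinearMap.opNorm_comp_le _ _).trans ?_
      exact (mul_le_of_le_one_right (norm_nonneg _) px_norm).trans a4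
    have jp := jb_rpow_pos η m
    unfold dint
    refine (norm_add_le _ _).trans ?_
    rw [norm_smul, norm_smul, add_mul]
    refine add_le_add ?_ ?_
    · rw [mul_assoc]
      exact mul_le_mul a1 a5 (norm_nonneg _) hA
    · calc _ ≤ (B * jb η ^ m) * A' := mul_le_mul a2 a3 (norm_nonneg _) (by positivity)
        _ = _ := by ring
  have cF' : Continuous (fderiv ℝ F) := hF.1.continuous_fderiv (by simp)
  have cG' : Continuous (fderiv ℝ G) := hG.1.continuous_fderiv (by simp)
  have cF := hF.1.continuous
  have cG := hG.1.continuous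
  have hmeas : AEStronglyMeasurable (dint F G p) volume := by
    apply Continuous.aestronglyMeasurable
    unfold dint
    have c1 : Continuous (fun η : ℝ => F (p.1, p.2 - η)) := by fun_prop
    have c2 : Continuous (fun η : ℝ => G (p.1, η)) := by fun_prop
    have c3 : Continuous (fun η : ℝ => fderiv ℝ F (p.1, p.2 - η)) := by fun_prop
    have c4 : Continuous (fun η : ℝ => fderiv ℝ G (p.1, η)) := by fun_prop
    have c5 : Continuous (fun η : ℝ => (fderiv ℝ G (p.1, η)).comp px) :=
      c4.clm_comp continuous_const
    exact (c1.smul c5).add (c2.smul c3)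
  have hbi : Integrable (fun η => (A * B' + B * A') * jb η ^ m) := (jb_int hm).const_mul _
  refine ⟨hbi.mono' hmeas (Eventually.of_forall fun η =>
    hbound η p (Metric.mem_closedBall_self zero_le_one)), ?_⟩
  exact hasFDerivAt_integral_of_dominated_of_fderiv_le
    (F := fun (p : TS N) η => F (p.1, p.2 - η) * G (p.1, η)) (F' := dint F G)
    (Metric.closedBall_mem_nhds p one_pos)
    (Eventually.of_forall fun q => Continuous.aestronglyMeasurable (by fun_prop))
    (Sym.int hm hF hG p) hmeas (Eventually.of_forall hbound) hbi
    (Eventually.of_forall fun η q _ => dint_has hF.1 hG.1 q η)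

lemma D_conv {m : ℝ} (hm : m < -1) {F G : TS N → ℂ} (hF : Sym m F) (hG : Sym m G) (v : TS N) :
    D v (conv F G) = conv (D v F) G + conv F (D (px v) G) := by
  funext p
  obtain ⟨hi, hd⟩ := conv_hasFDerivAt hm hF hG p
  simp only [D, hd.fderiv]
  rw [ContinuousLinearMap.integral_apply hi]
  change _ = (∫ η : ℝ, (D v F) (p.1, p.2 - η) * G (p.1, η)) +
    ∫ η : ℝ, F (p.1, p.2 - η) * (D (px v) G) (p.1, η)
  rw [← integral_add (Sym.int hm (hF.Dv v) hG p) (Sym.int hm hF (hG.Dv _) p)]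
  congr 1
  funext η
  simp [dint, D]
  ring

lemma conv_smooth {m : ℝ} (hm : m < -1) {F G : TS N → ℂ} (hF : Sym m F) (hG : Sym m G) :
    Sm (conv F G) := by
  have hd : ∀ {F G : TS N → ℂ}, Sym m F → Sym m G → Differentiable ℝ (conv F G) :=
    fun hF hG p => (conv_hasFDerivAt hm hF hG p).2.differentiableAt
  refine contDiff_infty.2 fun n => ?_
  induction n generalizing F G with
  | zero => exact contDiff_zero.2 (hd hF hG).continuous
  | succ n ih =>
    push_cast
    rw [contDiff_succ_iff_fderiv_apply]
    refine ⟨hd hF hG, by simp, fun v => ?_⟩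
    change ContDiff ℝ n (D v (conv F G))
    rw [D_conv hm hF hG]
    exact (ih (hF.Dv v) hG).add (ih hF (hG.Dv _))

lemma Dt_conv {m : ℝ} (hm : m < -1) {F G : TS N → ℂ} (hF : Sym m F) (hG : Sym m G) :
    D et (conv F G) = conv (D et F) G := by
  rw [D_conv hm hF hG]
  funext p
  have h0 : px (et : TS N) = 0 := by simp [px, et]
  simp [conv, h0, D]

lemma Dx_conv {m : ℝ} (hm : m < -1) {F G : TS N → ℂ} (hF : Sym m F) (hG : Sym m G) (i : Fin N) :
    D (ex i) (conv F G) = conv (D (ex i) F) G + conv F (D (ex i) G) := by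
  rw [D_conv hm hF hG]
  simp [px, ex]

lemma hasDerivAt_slice {F : TS N → ℂ} (hF : Sm F) (x : Fin N → ℝ) (t : ℝ) :
    HasDerivAt (fun t => F (x, t)) (D et F (x, t)) t := by
  have h2 : HasDerivAt (fun t : ℝ => ((x, t) : TS N)) et t := by
    have := (hasDerivAt_const t x).prodMk (hasDerivAt_id t)
    simpa [et] using this
  exact (hF.diff (x, t)).hasFDerivAt.comp_hasDerivAt t h2

lemma X_conv {m : ℝ} (hm : m < -1) {F G : TS N → ℂ} (hF : Sym m F) (hG : Sym m G) :
    M (D et (conv F G)) = conv (M (D et F)) G + (conv F G + conv F (M (D et G))) := by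
  rw [Dt_conv hm hF hG]
  funext p
  have cF := hF.1.continuous
  have cG := hG.1.continuous
  have bMG : Bd 0 (M G) := hG.bd.M.mono (by linarith)
  have cMG : Continuous (M G) := hG.1.M.continuous
  have hGX : Sym m (G + M (D et G)) := hG.add hG.X
  -- integration by parts
  have ibp := integral_mul_deriv_eq_deriv_mul_of_integrable
    (u := fun η => F (p.1, p.2 - η)) (v := fun η => M G (p.1, η))
    (u' := fun η => - D et F (p.1, p.2 - η)) (v' := fun η => (G + M (D et G)) (p.1, η))
    (fun η _ => by
      have := (hasDerivAt_slice hF.1 p.1 (p.2 - η)).scomp η ((hasDerivAt_id η).const_sub p.2)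
      rw [neg_one_smul] at this
      exact this)
    (fun η _ => by
      have := hasDerivAt_slice hG.1.M p.1 η
      rw [D_M _ hG.1] at this
      simpa [et] using this)
    (Sym.int hm hF hGX p)
    (by
      have := (conv_int' hm hF.Dt.1.continuous cMG hF.Dt.bd bMG p).neg
      refine this.congr (Eventually.of_forall fun η => ?_)
      simp)
    (conv_int' hm cF cMG hF.bd bMG p)
  have e1 : (conv F G + conv F (M (D et G))) p
      = ∫ η, F (p.1, p.2 - η) * (G + M (D et G)) (p.1, η) := by
    change (∫ η : ℝ, F (p.1, p.2 - η) * G (p.1, η)) +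
      (∫ η : ℝ, F (p.1, p.2 - η) * M (D et G) (p.1, η)) = _
    rw [← integral_add (Sym.int hm hF hG p) (Sym.int hm hF hG.X p)]
    congr 1; funext η; simp [mul_add]
  rw [Pi.add_apply, e1, ibp, ← integral_neg]
  change (p.2 : ℂ) * (∫ η : ℝ, D et F (p.1, p.2 - η) * G (p.1, η)) =
    (∫ η : ℝ, M (D et F) (p.1, p.2 - η) * G (p.1, η)) + _
  have hI := conv_int' hm hF.Dt.1.continuous cMG hF.Dt.bd bMG p
  have e2 : (fun η => -(-D et F (p.1, p.2 - η) * M G (p.1, η))) =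
      fun η => D et F (p.1, p.2 - η) * M G (p.1, η) := by
    funext η; ring
  rw [e2, ← integral_add (Sym.int hm hF.X hG p) hI, ← integral_const_mul]
  congr 1
  funext η
  simp [M]
  ring

lemma conv_Sym {m : ℝ} (hm : m < -1) {F G : TS N → ℂ} (hF : Sym m F) (hG : Sym m G) :
    Sym m (conv F G) := by
  refine ⟨conv_smooth hm hF hG, fun L n => ?_⟩
  induction n generalizing F G L with
  | zero =>
    simp only [DT, Function.iterate_zero, id, Nat.cast_zero, sub_zero]
    induction L using List.reverseRecOn generalizing F G with
    | nil => exact hF.bd.conv hm hG.bd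
    | append_singleton L i ih =>
      rw [DL_append, Dx_conv hm hF hG,
        DL_add L (conv_smooth hm (hF.Dx i) hG) (conv_smooth hm hF (hG.Dx i))]
      exact (ih (hF.Dx i) hG).add (ih hF (hG.Dx i))
  | succ n ih =>
    have S := conv_smooth hm hF hG
    have b1 : Bd (m - n) (DL L (DT (n+1) (conv F G))) := by
      rw [DT_succ', Dt_conv hm hF hG]
      exact ih hF.Dt hG L
    have b2 : Bd (m - n) (M (DL L (DT (n+1) (conv F G)))) := by
      have s1 := conv_smooth hm hF.X hG
      have s2 := conv_smooth hm hF hG.X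
      have e : DL L (DT n (M (D et (conv F G)))) =
          M (DL L (DT (n+1) (conv F G))) + (n : ℂ) • DL L (DT n (conv F G)) := by
        rw [DT_X n S, DL_add L (S.DT _).M ((S.DT n).csmul _), DL_M L (S.DT _),
          DL_smul L _ (S.DT n)]
      have e' : M (DL L (DT (n+1) (conv F G))) =
          DL L (DT n (M (D et (conv F G)))) + (-(n : ℂ)) • DL L (DT n (conv F G)) := by
        rw [e]; funext p; simp
      have s3 : Sm (conv F G + conv F (M (D et G))) := S.add s2
      have s4 : Sm (DT n (conv F G) + DT n (conv F (M (D et G)))) := (S.DT n).add (s2.DT n)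
      rw [e', X_conv hm hF hG, DT_add n s1 s3, DT_add n S s2,
        DL_add L (s1.DT n) s4, DL_add L (S.DT n) (s2.DT n)]
      exact ((ih hF.X hG L).add ((ih hF hG L).add (ih hF hG.X L))).add ((ih hF hG L).smul _)
    have := b1.gain b2
    refine this.mono (by push_cast; linarith)

/-! Translation to the frozen definitions. -/

lemma iteratedDeriv_slice {F : TS N → ℂ} (hF : Sm F) (n : ℕ) (x : Fin N → ℝ) :
    iteratedDeriv n (fun t => F (x, t)) = fun t => DT n F (x, t) := by
  induction n with
  | zero => simp [DT]
  | succ n ih =>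
    rw [iteratedDeriv_succ, ih, DT_succ]
    funext t
    exact (hasDerivAt_slice (hF.DT n) x t).deriv

lemma dirDerivs_slice {F : TS N → ℂ} (hF : Sm F) (L : List (Fin N)) (ξ : ℝ) :
    dirDerivs L (fun x => F (x, ξ)) = fun x => DL L F (x, ξ) := by
  induction L with
  | nil => rfl
  | cons i L ih =>
    change dirDeriv i (dirDerivs L (fun x => F (x, ξ))) = fun x => D (ex i) (DL L F) (x, ξ)
    rw [ih]
    funext x
    have h2 : HasFDerivAt (fun x : Fin N → ℝ => ((x, ξ) : TS N))
        (ContinuousLinearMap.inl ℝ (Fin N → ℝ) ℝ) x := hasFDerivAt_prodMk_left x ξ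
    have := ((hF.DL L).diff (x, ξ)).hasFDerivAt.comp x h2
    change HasFDerivAt (fun x => DL L F (x, ξ)) _ x at this
    simp [dirDeriv, this.fderiv, D, ex]

lemma translate {F : TS N → ℂ} (hF : Sm F) (L : List (Fin N)) (n : ℕ) (x : Fin N → ℝ) (ξ : ℝ) :
    dirDerivs L (fun x' => iteratedDeriv n (fun t => F (x', t)) ξ) x = DL L (DT n F) (x, ξ) := by
  simp only [iteratedDeriv_slice hF]
  rw [dirDerivs_slice (hF.DT n)]

lemma sym_of {m : ℝ} {a : (Fin N → ℝ) → ℝ → ℂ} (ha : Sm (fun p : TS N => a p.1 p.2))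
    (h : IsSymbolOfOrder m a) : Sym m (fun p : TS N => a p.1 p.2) := by
  refine ⟨ha, fun L n K hK => ?_⟩
  obtain ⟨C, hC⟩ := h L n K hK
  refine ⟨max C 0, le_max_right _ _, fun x hx ξ => ?_⟩
  rw [← translate ha]
  refine (hC x hx ξ).trans ?_
  exact mul_le_mul_of_nonneg_right (le_max_left _ _) (jb_rpow_pos ξ _).le

lemma of_sym {m : ℝ} {a : (Fin N → ℝ) → ℝ → ℂ} (h : Sym m (fun p : TS N => a p.1 p.2)) :
    IsSymbolOfOrder m a := by
  intro L n K hK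
  obtain ⟨C, _, hC⟩ := h.2 L n K hK
  refine ⟨C, fun x hx ξ => ?_⟩
  have := hC x hx ξ
  rw [← translate h.1] at this
  exact this

end ConvSym

/-- If `m < -1` and `a, b` are (smooth) symbols of order `m` on `ℝ^N × ℝ`, then the
fiberwise convolution `c(x,ξ) = ∫ a(x,ξ-η) b(x,η) dη` is again a symbol of order `m`. -/
theorem convolution_isSymbolOfOrder {N : ℕ} (m : ℝ) (hm : m < -1)
    (a b : (Fin N → ℝ) → ℝ → ℂ)
    (ha : ContDiff ℝ (⊤ : ℕ∞) (fun p : (Fin N → ℝ) × ℝ => a p.1 p.2))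
    (hb : ContDiff ℝ (⊤ : ℕ∞) (fun p : (Fin N → ℝ) × ℝ => b p.1 p.2))
    (hsa : IsSymbolOfOrder m a) (hsb : IsSymbolOfOrder m b) :
    IsSymbolOfOrder m (fun x ξ => ∫ η : ℝ, a x (ξ - η) * b x η) := by
  exact ConvSym.of_sym (ConvSym.conv_Sym hm (ConvSym.sym_of ha hsa) (ConvSym.sym_of hb hsb))
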